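/- Let p = p(n) ∈ [0,1] satisfy 3 log n/(4n) ≤ p(n) for all sufficiently large n and p(n) → 0 as n → ∞. Then asymptotically almost surely G ~ G(n,p) satisfies all of the following: (a) for each pair of distinct vertices u, v of G, there are fewer than np/2400 paths of length 2 joining u and v; (b) every vertex of G has degree at most 4np; (c) every set A of ⌈n/3⌉ vertices of G induces at least n²p/25 edges. -/

import Mathlib

open Filter

/-- The outneighbourhood `N1(v)` of `v` in the digraph with arc relation `D`. -/
def outNbr {V : Type*} (D : V → V → Prop) (v : V) : Set V := {w | w ≠ v ∧ D v w}

/-- The inneighbourhood `N⁻(v)` of `v`. -/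
def inNbr {V : Type*} (D : V → V → Prop) (v : V) : Set V := {w | w ≠ v ∧ D w v}

/-- The second outneighbourhood `N2(v)` of `v`. -/
def outNbr2 {V : Type*} (D : V → V → Prop) (v : V) : Set V :=
  {w | w ∉ insert v (outNbr D v) ∧ ∃ u ∈ outNbr D v, D u w}

/-- `v` is a Seymour vertex: `|N2(v)| ≥ |N1(v)|`. -/
def SeymourVertex {V : Type*} (D : V → V → Prop) (v : V) : Prop :=
  (outNbr D v).ncard ≤ (outNbr2 D v).ncard

/-- `v` is a Sullivan vertex: `|N2(v)| ≥ |N⁻(v)|`. -/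
def SullivanVertex {V : Type*} (D : V → V → Prop) (v : V) : Prop :=
  (inNbr D v).ncard ≤ (outNbr2 D v).ncard

/-- An oriented graph: an asymmetric (hence irreflexive and loopless) arc relation. -/
def OrientedGraph {V : Type*} (D : V → V → Prop) : Prop := ∀ u v, D u v → ¬ D v u

/-- `D` is an orientation of the simple graph `G`. -/
def Orients {V : Type*} (D : V → V → Prop) (G : SimpleGraph V) : Prop :=
  OrientedGraph D ∧ ∀ u v, G.Adj u v ↔ (D u v ∨ D v u)

/-- Strong connectivity of a digraph: every vertex reaches every other by a directed path. -/
def StrongConn {V : Type*} (D : V → V → Prop) : Prop := ∀ u v, Relation.ReflTransGen D u v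

/-- The number of edges of `G` with one endpoint in `A` and the other in `B`
(counted via ordered pairs; equals `e(A,B)` for disjoint `A`, `B`). -/
noncomputable def eBtw {V : Type*} (G : SimpleGraph V) (A B : Set V) : ℕ :=
  {p : V × V | p.1 ∈ A ∧ p.2 ∈ B ∧ G.Adj p.1 p.2}.ncard

/-- The number of edges of `G` with both endpoints in `A`. -/
noncomputable def eIn {V : Type*} (G : SimpleGraph V) (A : Set V) : ℕ :=
  {e | e ∈ G.edgeSet ∧ ∀ v ∈ e, v ∈ A}.ncard

open scoped Classical in
/-- The probability that the binomial random graph `G(n,p)` satisfies the property `P`. -/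
noncomputable def gnpProb (n : ℕ) (p : ℝ) (P : SimpleGraph (Fin n) → Prop) : ℝ :=
  ∑ G : SimpleGraph (Fin n),
    if P G then p ^ G.edgeSet.ncard * (1 - p) ^ (n.choose 2 - G.edgeSet.ncard) else 0

/-!
Each of the three properties is a Chernoff bound followed by a union bound. For pairwise disjoint
edge sets `F`, the events that all edges of `F` are present are independent. Hence the degree
of `v`, the number of paths `u - w - v` (which use disjoint pairs of edges for different `w`) and
the number of edges inside `A` are all sums of independent indicators, and a sum with mean `m`
crosses the level `x * m` with probability at most `exp (-m * klFun x)`.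

For the degrees, `4 / 3 < klFun 4` makes the exponent exceed `log n`. For the paths, the mean
`n p²` is smaller than the target `δ n p` by the factor `p / δ → 0`, so the exponent is of order
`n p log (1 / p)`, which dominates `log n`. For the edges, the exponent is of order `n² p`,
which dominates the logarithm of the number `2 ^ n` of vertex sets.
-/

open MeasureTheory ProbabilityTheory InformationTheory SimpleGraph
open scoped Finset unitInterval

section UnionBound

variable {Ω ι : Type*} {mΩ : MeasurableSpace Ω} {μ : Measure Ω}

lemma measureReal_exists_mem_le {s : Finset ι} {P : ι → Ω → Prop} {b : ℝ}
    (hP : ∀ i ∈ s, μ.real {ω | P i ω} ≤ b) : μ.real {ω | ∃ i ∈ s, P i ω} ≤ #s * b := by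
  calc μ.real {ω | ∃ i ∈ s, P i ω}
      = μ.real (⋃ i ∈ s, {ω | P i ω}) := by congr 1; ext ω; simp
    _ ≤ ∑ i ∈ s, μ.real {ω | P i ω} := measureReal_biUnion_finset_le s _
    _ ≤ #s * b := by simpa using Finset.sum_le_card_nsmul s _ b hP

end UnionBound

section AsymptoticallyAlmostSurely

variable {Ω : ℕ → Type*} {mΩ : ∀ n, MeasurableSpace (Ω n)} {μ : ∀ n, Measure (Ω n)}
  [∀ n, IsProbabilityMeasure (μ n)] {P Q : ∀ n, Ω n → Prop}

lemma tendsto_measureReal_one_of_eventually_not_le {b : ℕ → ℝ}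
    (hb : Tendsto b atTop (nhds 0))
    (hPb : ∀ᶠ n in atTop, (μ n).real {ω | ¬ P n ω} ≤ b n) :
    Tendsto (fun n ↦ (μ n).real {ω | P n ω}) atTop (nhds 1) := by
  have hlim : Tendsto (fun n ↦ 1 - b n) atTop (nhds 1) := by simpa using hb.const_sub 1
  refine tendsto_of_tendsto_of_tendsto_of_le_of_le' hlim tendsto_const_nhds ?_
    (.of_forall fun n ↦ measureReal_le_one)
  filter_upwards [hPb] with n hn
  have hunion := measureReal_union_le (μ := μ n) {ω | P n ω} {ω | ¬ P n ω}
  rw [show {ω | P n ω} ∪ {ω | ¬ P n ω} = Set.univ by ext ω; simpa using em (P n ω),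
    probReal_univ] at hunion
  linarith

lemma tendsto_measureReal_one_mono (hPQ : ∀ n ω, P n ω → Q n ω)
    (hP : Tendsto (fun n ↦ (μ n).real {ω | P n ω}) atTop (nhds 1)) :
    Tendsto (fun n ↦ (μ n).real {ω | Q n ω}) atTop (nhds 1) :=
  tendsto_of_tendsto_of_tendsto_of_le_of_le hP tendsto_const_nhds
    (fun n ↦ measureReal_mono (hPQ n)) fun _ ↦ measureReal_le_one

lemma tendsto_measureReal_and_one
    (hmP : ∀ n, MeasurableSet {ω | P n ω}) (hmQ : ∀ n, MeasurableSet {ω | Q n ω})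
    (hP : Tendsto (fun n ↦ (μ n).real {ω | P n ω}) atTop (nhds 1))
    (hQ : Tendsto (fun n ↦ (μ n).real {ω | Q n ω}) atTop (nhds 1)) :
    Tendsto (fun n ↦ (μ n).real {ω | P n ω ∧ Q n ω}) atTop (nhds 1) := by
  have hlim : Tendsto (fun n ↦ (1 - (μ n).real {ω | P n ω}) + (1 - (μ n).real {ω | Q n ω}))
      atTop (nhds 0) := by simpa using (hP.const_sub 1).add (hQ.const_sub 1)
  refine tendsto_measureReal_one_of_eventually_not_le hlim (.of_forall fun n ↦ ?_)
  rw [← probReal_compl_eq_one_sub (hmP n), ← probReal_compl_eq_one_sub (hmQ n)]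
  refine (measureReal_mono fun ω hω ↦ ?_).trans (measureReal_union_le _ _)
  exact not_and_or.1 hω

end AsymptoticallyAlmostSurely

section Chernoff

variable {Ω κ : Type*} {mΩ : MeasurableSpace Ω} {μ : Measure Ω} {A : κ → Set Ω}

lemma natCast_ncard_setOf_mem_eq_sum_indicator [Fintype κ] (A : κ → Set Ω) :
    (fun ω ↦ ({k | ω ∈ A k}.ncard : ℝ)) = ∑ k, (A k).indicator fun _ ↦ 1 := by
  classical
  ext ω
  simp [Set.ncard_eq_toFinset_card', Set.indicator_apply]

lemma mgf_indicator_one [IsProbabilityMeasure μ] {S : Set Ω} (hS : MeasurableSet S) (t : ℝ) :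
    mgf (S.indicator fun _ ↦ 1) μ t = 1 + μ.real S * (Real.exp t - 1) := by
  have hexp (ω : Ω) : Real.exp (t * S.indicator (fun _ ↦ 1) ω)
      = 1 + S.indicator (fun _ ↦ Real.exp t - 1) ω := by
    by_cases hω : ω ∈ S <;> simp [hω]
  simp_rw [mgf, hexp]
  rw [integral_add (integrable_const _) ((integrable_const _).indicator hS),
    integral_indicator_const _ hS]
  simp

lemma mgf_ncard_setOf_mem_le [Fintype κ] (hind : iIndepSet A μ)
    (hA : ∀ k, MeasurableSet (A k)) (t : ℝ) :
    mgf (fun ω ↦ ({k | ω ∈ A k}.ncard : ℝ)) μ t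
      ≤ Real.exp ((∑ k, μ.real (A k)) * (Real.exp t - 1)) := by
  have := hind.isProbabilityMeasure
  rw [natCast_ncard_setOf_mem_eq_sum_indicator, hind.iIndepFun_indicator.mgf_sum
    fun k ↦ measurable_const.indicator (hA k), Finset.sum_mul, Real.exp_sum]
  refine Finset.prod_le_prod (fun k _ ↦ mgf_nonneg) fun k _ ↦ ?_
  rw [mgf_indicator_one (hA k), add_comm]
  exact Real.add_one_le_exp _

lemma integrable_exp_mul_ncard_setOf_mem [Finite κ] [IsFiniteMeasure μ]
    (hA : ∀ k, MeasurableSet (A k)) (t : ℝ) :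
    Integrable (fun ω ↦ Real.exp (t * ({k | ω ∈ A k}.ncard : ℝ))) μ := by
  refine integrable_exp_mul_of_mem_Icc (a := 0) (b := Nat.card κ) ?_ (.of_forall fun ω ↦ ?_)
  · have := Fintype.ofFinite κ
    rw [natCast_ncard_setOf_mem_eq_sum_indicator]
    exact Finset.univ.aemeasurable_sum fun k _ ↦ aemeasurable_const.indicator (hA k)
  · exact ⟨Nat.cast_nonneg _, Nat.cast_le.2 <| Set.ncard_le_card _⟩

variable [Fintype κ]

-- The tilt `t = log x` is optimal, and `klFun x = x * log x + 1 - x` is the resulting rate.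
lemma measureReal_mul_le_ncard_le (hind : iIndepSet A μ) (hA : ∀ k, MeasurableSet (A k))
    {m x : ℝ} (hm : ∑ k, μ.real (A k) ≤ m) (hx : 1 ≤ x) :
    μ.real {ω | x * m ≤ {k | ω ∈ A k}.ncard} ≤ Real.exp (-(m * klFun x)) := by
  have := hind.isProbabilityMeasure
  calc μ.real {ω | x * m ≤ {k | ω ∈ A k}.ncard}
      ≤ Real.exp (-Real.log x * (x * m)) *
          mgf (fun ω ↦ ({k | ω ∈ A k}.ncard : ℝ)) μ (Real.log x) :=
        measure_ge_le_exp_mul_mgf _ (Real.log_nonneg hx) (integrable_exp_mul_ncard_setOf_mem hA _)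
    _ ≤ Real.exp (-Real.log x * (x * m)) * Real.exp (m * (x - 1)) := by
        gcongr
        refine (mgf_ncard_setOf_mem_le hind hA _).trans ?_
        rw [Real.exp_log (by linarith)]
        gcongr
    _ = Real.exp (-(m * klFun x)) := by rw [← Real.exp_add, klFun_apply]; ring_nf

lemma measureReal_ncard_le_mul_le (hind : iIndepSet A μ) (hA : ∀ k, MeasurableSet (A k))
    {m x : ℝ} (hm : m ≤ ∑ k, μ.real (A k)) (hx0 : 0 < x) (hx1 : x ≤ 1) :
    μ.real {ω | {k | ω ∈ A k}.ncard ≤ x * m} ≤ Real.exp (-(m * klFun x)) := by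
  have := hind.isProbabilityMeasure
  calc μ.real {ω | {k | ω ∈ A k}.ncard ≤ x * m}
      ≤ Real.exp (-Real.log x * (x * m)) *
          mgf (fun ω ↦ ({k | ω ∈ A k}.ncard : ℝ)) μ (Real.log x) :=
        measure_le_le_exp_mul_mgf _ (Real.log_nonpos hx0.le hx1)
          (integrable_exp_mul_ncard_setOf_mem hA _)
    _ ≤ Real.exp (-Real.log x * (x * m)) * Real.exp (m * (x - 1)) := by
        gcongr
        refine (mgf_ncard_setOf_mem_le hind hA _).trans ?_
        rw [Real.exp_log hx0]
        exact Real.exp_le_exp.2 (mul_le_mul_of_nonpos_right hm (by linarith))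
    _ = Real.exp (-(m * klFun x)) := by rw [← Real.exp_add, klFun_apply]; ring_nf

end Chernoff

section BinomialRandomGraph

variable {V : Type*}

instance [Countable V] : MeasurableSingletonClass (SimpleGraph V) where
  measurableSet_singleton G := by
    rw [← edgeSet_injective.preimage_image {G}, Set.image_singleton]
    exact measurable_edgeSet (measurableSet_singleton _)

lemma measurableSet_setOf_subset_edgeSet (T : Finset (Sym2 V)) :
    MeasurableSet {G : SimpleGraph V | ↑T ⊆ G.edgeSet} := by
  have hinter : {G : SimpleGraph V | ↑T ⊆ G.edgeSet} = ⋂ e ∈ T, {G | e ∈ G.edgeSet} := by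
    ext G; simp [Set.subset_def]
  rw [hinter]
  exact T.measurableSet_biInter fun e _ ↦ measurable_set_iff.1 measurable_edgeSet e |>.setOf

lemma setBernoulli_setOf_subset {ι : Type*} {u : Set ι} (p : I) {T : Finset ι} (hT : ↑T ⊆ u) :
    setBernoulli u p {s | ↑T ⊆ s} = ENNReal.ofReal p ^ #T := by
  have hpi : (fun P : ι → Prop ↦ {i | P i}) ⁻¹' {s | ↑T ⊆ s} = Set.pi ↑T fun _ ↦ {P | P} := by
    ext P; simp [Set.subset_def]
  rw [setBernoulli_apply', hpi, Measure.infinitePi_pi _ fun _ _ ↦ .of_discrete]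
  refine Finset.prod_eq_pow_card fun i hi ↦ ?_
  have : i ∈ u := hT hi
  have hcoe : (unitInterval.toNNReal p : ENNReal) = ENNReal.ofReal p := by
    rw [ENNReal.ofReal_eq_coe_nnreal p.2.1]; rfl
  simp [this, hcoe]

lemma binomialRandom_setOf_subset_edgeSet [Countable V] (p : I) {T : Finset (Sym2 V)}
    (hT : ∀ e ∈ T, ¬ e.IsDiag) :
    G(V, p) {G | ↑T ⊆ G.edgeSet} = ENNReal.ofReal p ^ #T := by
  rw [binomialRandom_eq_map, Measure.map_apply measurable_fromEdgeSet
    (measurableSet_setOf_subset_edgeSet T)]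
  have hdiag : ↑T ⊆ (Sym2.diagSetᶜ : Set (Sym2 V)) := fun e he ↦ by simpa using hT e he
  convert setBernoulli_setOf_subset p hdiag using 2
  ext S
  simp [Set.subset_sdiff, Set.subset_compl_iff_disjoint_right.1 hdiag]

lemma binomialRandom_real_setOf_subset_edgeSet [Countable V] (p : I) {T : Finset (Sym2 V)}
    (hT : ∀ e ∈ T, ¬ e.IsDiag) : G(V, p).real {G | ↑T ⊆ G.edgeSet} = p ^ #T := by
  simp [measureReal_def, binomialRandom_setOf_subset_edgeSet p hT, p.2.1]

lemma iIndepSet_setOf_subset_edgeSet [Countable V] (p : I) {κ : Type*} {F : κ → Finset (Sym2 V)}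
    (hF : ∀ k, ∀ e ∈ F k, ¬ e.IsDiag) (hdisj : Pairwise fun k l ↦ Disjoint (F k) (F l)) :
    iIndepSet (fun k ↦ {G : SimpleGraph V | ↑(F k) ⊆ G.edgeSet}) G(V, p) := by
  classical
  rw [iIndepSet_iff_meas_biInter fun k ↦ measurableSet_setOf_subset_edgeSet (F k)]
  intro s
  have hinter : ⋂ k ∈ s, {G : SimpleGraph V | ↑(F k) ⊆ G.edgeSet}
      = {G | ↑(s.biUnion F) ⊆ G.edgeSet} := by ext G; simp
  have hunion : ∀ e ∈ s.biUnion F, ¬ e.IsDiag := fun e he ↦ by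
    obtain ⟨k, -, hk⟩ := Finset.mem_biUnion.1 he
    exact hF k e hk
  rw [hinter, binomialRandom_setOf_subset_edgeSet p hunion,
    Finset.card_biUnion fun k _ l _ hkl ↦ hdisj hkl, ← Finset.prod_pow_eq_pow_sum]
  exact Finset.prod_congr rfl fun k _ ↦ (binomialRandom_setOf_subset_edgeSet p (hF k)).symm

lemma gnpProb_eq_binomialRandom_real (n : ℕ) (p : I) (P : SimpleGraph (Fin n) → Prop) :
    gnpProb n p P = G(Fin n, p).real {G | P G} := by
  classical
  rw [gnpProb, ← Finset.sum_filter, ← Finset.coe_filter_univ, ← sum_measureReal_singleton]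
  refine Finset.sum_congr rfl fun G _ ↦ ?_
  simp [measureReal_def]

end BinomialRandomGraph

section BinomialRandomGraphTails

variable {V : Type*} {x : ℝ}

lemma card_nondiag_sym2_subset [Finite V] (A : Set V) :
    Nat.card {e : Sym2 V // ¬ e.IsDiag ∧ ∀ v ∈ e, v ∈ A} = A.ncard.choose 2 := by
  classical
  have := Fintype.ofFinite V
  rw [Nat.card_eq_fintype_card, Set.ncard_eq_toFinset_card', ← Sym2.card_image_offDiag]
  refine Fintype.card_of_subtype _ fun e ↦ ?_
  induction e with | h u v
  simp only [Finset.mem_image, Finset.mem_offDiag, Set.mem_toFinset, Prod.exists,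
    Sym2.mk_isDiag_iff, Sym2.mem_iff, forall_eq_or_imp, forall_eq]
  grind

lemma binomialRandom_real_eIn_le_le [Finite V] (p : I) (A : Set V) (hx0 : 0 < x) (hx1 : x ≤ 1)
    {m : ℝ} (hm : m ≤ A.ncard.choose 2 * p) :
    G(V, p).real {G | eIn G A ≤ x * m} ≤ Real.exp (-(m * klFun x)) := by
  classical
  have := Fintype.ofFinite V
  let F (e : {e : Sym2 V // ¬ e.IsDiag ∧ ∀ v ∈ e, v ∈ A}) : Finset (Sym2 V) := {e.1}
  have hF : ∀ e, ∀ f ∈ F e, ¬ f.IsDiag := by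
    rintro ⟨e, he, _⟩ f hf
    rwa [Finset.mem_singleton.1 hf]
  have hdisj : Pairwise fun e e' ↦ Disjoint (F e) (F e') := fun e e' hne ↦ by
    simpa [F, Subtype.ext_iff] using hne
  have hcard := card_nondiag_sym2_subset A
  have hmean : m ≤ ∑ e, G(V, p).real {G | ↑(F e) ⊆ G.edgeSet} := by
    simp_rw [binomialRandom_real_setOf_subset_edgeSet p (hF _)]
    simpa [F, ← Nat.card_eq_fintype_card, hcard] using hm
  have hcount (G : SimpleGraph V) : {e | ↑(F e) ⊆ G.edgeSet}.ncard = eIn G A := by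
    rw [← Set.ncard_image_of_injective _ Subtype.val_injective, eIn]
    congr 1
    ext e
    simpa [F] using fun (he : e ∈ G.edgeSet) _ ↦ G.not_isDiag_of_mem_edgeSet he
  simpa [hcount] using measureReal_ncard_le_mul_le (iIndepSet_setOf_subset_edgeSet p hF hdisj)
    (fun e ↦ measurableSet_setOf_subset_edgeSet _) hmean hx0 hx1

variable [Fintype V] (p : I)

lemma binomialRandom_real_le_ncard_neighborSet_le (v : V) (hx : 1 ≤ x) :
    G(V, p).real {G | x * (Fintype.card V * p) ≤ (G.neighborSet v).ncard}
      ≤ Real.exp (-(Fintype.card V * p * klFun x)) := by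
  classical
  let F (w : {w // w ≠ v}) : Finset (Sym2 V) := {s(v, w.1)}
  have hF : ∀ w, ∀ e ∈ F w, ¬ e.IsDiag := by
    rintro ⟨w, hw⟩ e he
    simpa [Finset.mem_singleton.1 he] using hw.symm
  have hdisj : Pairwise fun w z ↦ Disjoint (F w) (F z) := by
    rintro ⟨w, hw⟩ ⟨z, hz⟩ hwz
    simp only [F, Finset.disjoint_singleton]
    grind
  have hmean : ∑ w, G(V, p).real {G | ↑(F w) ⊆ G.edgeSet} ≤ Fintype.card V * p := by
    simp_rw [binomialRandom_real_setOf_subset_edgeSet p (hF _)]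
    simp only [F, Finset.card_singleton, pow_one, Finset.sum_const, nsmul_eq_mul]
    gcongr
    · exact p.2.1
    · exact Fintype.card_subtype_le _
  have hcount (G : SimpleGraph V) :
      {w | ↑(F w) ⊆ G.edgeSet}.ncard = (G.neighborSet v).ncard := by
    rw [← Set.ncard_image_of_injective _ Subtype.val_injective]
    congr 1
    ext w
    simpa [F] using fun h : G.Adj v w ↦ h.ne'
  simpa [hcount] using measureReal_mul_le_ncard_le (iIndepSet_setOf_subset_edgeSet p hF hdisj)
    (fun w ↦ measurableSet_setOf_subset_edgeSet _) hmean hx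

lemma binomialRandom_real_le_ncard_commonNeighbors_le {u v : V} (huv : u ≠ v) (hx : 1 ≤ x) :
    G(V, p).real {G | x * (Fintype.card V * p ^ 2) ≤ (G.commonNeighbors u v).ncard}
      ≤ Real.exp (-(Fintype.card V * p ^ 2 * klFun x)) := by
  classical
  let F (w : {w // w ≠ u ∧ w ≠ v}) : Finset (Sym2 V) := {s(u, w.1), s(v, w.1)}
  have hF : ∀ w, ∀ e ∈ F w, ¬ e.IsDiag := by
    rintro ⟨w, hwu, hwv⟩ e he
    rcases Finset.mem_insert.1 he with rfl | he
    · simpa using hwu.symm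
    · simpa [Finset.mem_singleton.1 he] using hwv.symm
  have hdisj : Pairwise fun w z ↦ Disjoint (F w) (F z) := by
    rintro ⟨w, hwu, hwv⟩ ⟨z, hzu, hzv⟩ hwz
    simp only [F, Finset.disjoint_left, Finset.mem_insert, Finset.mem_singleton]
    grind
  have hcard (w) : #(F w) = 2 := Finset.card_pair (by grind)
  have hmean : ∑ w, G(V, p).real {G | ↑(F w) ⊆ G.edgeSet} ≤ Fintype.card V * p ^ 2 := by
    simp_rw [binomialRandom_real_setOf_subset_edgeSet p (hF _), hcard]
    simp only [Finset.sum_const, nsmul_eq_mul]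
    gcongr
    exact Fintype.card_subtype_le _
  have hcount (G : SimpleGraph V) :
      {w | ↑(F w) ⊆ G.edgeSet}.ncard = (G.commonNeighbors u v).ncard := by
    rw [← Set.ncard_image_of_injective _ Subtype.val_injective]
    congr 1
    ext w
    simpa [F, Set.pair_subset_iff, mem_commonNeighbors] using
      fun (hu : G.Adj u w) (hv : G.Adj v w) ↦ ⟨hu.ne', hv.ne'⟩
  simpa [hcount] using measureReal_mul_le_ncard_le (iIndepSet_setOf_subset_edgeSet p hF hdisj)
    (fun w ↦ measurableSet_setOf_subset_edgeSet _) hmean hx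

lemma binomialRandom_real_exists_le_ncard_neighborSet_le (hx : 1 ≤ x) :
    G(V, p).real {G | ∃ v, x * (Fintype.card V * p) ≤ (G.neighborSet v).ncard}
      ≤ Fintype.card V * Real.exp (-(Fintype.card V * p * klFun x)) := by
  simpa using measureReal_exists_mem_le (s := Finset.univ) fun v _ ↦
    binomialRandom_real_le_ncard_neighborSet_le p v hx

lemma binomialRandom_real_exists_le_ncard_commonNeighbors_le (hx : 1 ≤ x) :
    G(V, p).real
        {G | ∃ u v, u ≠ v ∧ x * (Fintype.card V * p ^ 2) ≤ (G.commonNeighbors u v).ncard}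
      ≤ Fintype.card V ^ 2 * Real.exp (-(Fintype.card V * p ^ 2 * klFun x)) := by
  classical
  have hunion := measureReal_exists_mem_le (s := (Finset.univ : Finset V).offDiag)
    fun uv huv ↦ binomialRandom_real_le_ncard_commonNeighbors_le p (Finset.mem_offDiag.1 huv).2.2 hx
  have hcard : #(Finset.univ : Finset V).offDiag ≤ Fintype.card V ^ 2 := by
    simp [Finset.offDiag_card, sq]
  simp only [Prod.exists, Finset.mem_offDiag, Finset.mem_univ, true_and] at hunion
  refine hunion.trans ?_
  gcongr
  exact_mod_cast hcard

lemma binomialRandom_real_exists_eIn_le_le (hx0 : 0 < x) (hx1 : x ≤ 1) {k : ℕ} {m : ℝ}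
    (hm : m ≤ k.choose 2 * p) :
    G(V, p).real {G | ∃ A : Set V, k ≤ A.ncard ∧ eIn G A ≤ x * m}
      ≤ 2 ^ Fintype.card V * Real.exp (-(m * klFun x)) := by
  classical
  have hmean (A : Set V) (hA : k ≤ A.ncard) : m ≤ A.ncard.choose 2 * p := by
    refine hm.trans ?_
    gcongr
    exact p.2.1
  have hunion := measureReal_exists_mem_le (s := {A : Set V | k ≤ A.ncard}.toFinset)
    fun A hA ↦ binomialRandom_real_eIn_le_le p A hx0 hx1 (hmean A (by simpa using hA))
  have hcard : #{A : Set V | k ≤ A.ncard}.toFinset ≤ 2 ^ Fintype.card V :=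
    (Finset.card_le_univ _).trans_eq Fintype.card_set
  simp only [Set.mem_toFinset, Set.mem_ofPred_eq] at hunion
  refine hunion.trans ?_
  gcongr
  exact_mod_cast hcard

end BinomialRandomGraphTails

section RealEstimates

lemma four_thirds_lt_klFun_four : 4 / 3 < klFun 4 := by
  have hlog : Real.log 4 = 2 * Real.log 2 := by
    rw [show (4 : ℝ) = 2 ^ 2 by norm_num, Real.log_pow]; norm_num
  rw [klFun_apply, hlog]
  linarith [Real.log_two_gt_d9]

lemma klFun_pos {x : ℝ} (hx : 0 ≤ x) (hx1 : x ≠ 1) : 0 < klFun x :=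
  (klFun_nonneg hx).lt_of_ne' (mt (klFun_eq_zero_iff hx).1 hx1)

lemma two_pow_le_exp (n : ℕ) : (2 : ℝ) ^ n ≤ Real.exp n := by
  rw [← Real.exp_one_pow]
  gcongr
  linarith [Real.add_one_le_exp 1]

lemma mul_sq_div_two_le_choose_ceil {t θ : ℝ} (ht : 0 < t) (hθ : θ * t ≤ t - 1) :
    θ * (t ^ 2 / 2) ≤ (⌈t⌉₊.choose 2 : ℝ) := by
  have hceil : t ≤ ⌈t⌉₊ := Nat.le_ceil t
  have hone : (1 : ℝ) ≤ ⌈t⌉₊ := mod_cast Nat.ceil_pos.2 ht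
  calc θ * (t ^ 2 / 2) = t * (θ * t) / 2 := by ring
    _ ≤ t * (⌈t⌉₊ - 1) / 2 := by gcongr; linarith
    _ ≤ ⌈t⌉₊ * (⌈t⌉₊ - 1) / 2 := by gcongr
    _ = (⌈t⌉₊.choose 2 : ℝ) := (Nat.cast_choose_two ℝ _).symm

end RealEstimates

section BinomialRandomGraphAlmostSurely

variable {p : ℕ → I} {c : ℝ}

lemma tendsto_binomialRandom_ncard_neighborSet_le {K : ℝ}
    (hp : ∀ᶠ n : ℕ in atTop, c * Real.log n ≤ n * p n) (hK : 1 ≤ K) (hcK : 1 < c * klFun K) :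
    Tendsto (fun n ↦ G(Fin n, p n).real
      {G | ∀ v, ((G.neighborSet v).ncard : ℝ) ≤ K * (n * p n)}) atTop (nhds 1) := by
  have hlim : Tendsto (fun n : ℕ ↦ (n : ℝ) ^ (-(c * klFun K - 1))) atTop (nhds 0) :=
    (tendsto_rpow_neg_atTop (by linarith)).comp tendsto_natCast_atTop_atTop
  refine tendsto_measureReal_one_of_eventually_not_le hlim ?_
  filter_upwards [hp, eventually_gt_atTop 0] with n hpn hn
  have hexp : -((n : ℝ) * p n * klFun K) ≤ Real.log n * (-(c * klFun K)) := by
    nlinarith [klFun_nonneg (by linarith : 0 ≤ K)]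
  calc G(Fin n, p n).real {G | ¬ ∀ v, ((G.neighborSet v).ncard : ℝ) ≤ K * (n * p n)}
      ≤ G(Fin n, p n).real {G | ∃ v, K * (n * p n) ≤ (G.neighborSet v).ncard} := by
        refine measureReal_mono fun G hG ↦ ?_
        obtain ⟨v, hv⟩ := not_forall.1 hG
        exact ⟨v, (not_le.1 hv).le⟩
    _ ≤ n * Real.exp (-(n * p n * klFun K)) := by
        simpa using binomialRandom_real_exists_le_ncard_neighborSet_le (V := Fin n) (p n) hK
    _ ≤ n * Real.exp (Real.log n * (-(c * klFun K))) := by gcongr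
    _ = n ^ (-(c * klFun K - 1)) := by
        have hn' : (0 : ℝ) < n := mod_cast hn
        rw [← Real.rpow_def_of_pos hn', neg_sub, Real.rpow_sub hn', Real.rpow_one,
          Real.rpow_neg hn'.le, div_eq_mul_inv]

lemma eventually_pos_of_mul_log_le (hc : 0 < c)
    (hp : ∀ᶠ n : ℕ in atTop, c * Real.log n ≤ n * p n) : ∀ᶠ n in atTop, 0 < (p n : ℝ) := by
  filter_upwards [hp, eventually_gt_atTop 1] with n hpn hn
  have hlog : 0 < Real.log n := Real.log_pos (mod_cast hn)
  exact pos_of_mul_pos_right ((mul_pos hc hlog).trans_le hpn) n.cast_nonneg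

lemma eventually_three_mul_log_le {δ : ℝ} (hc : 0 < c) (hδ : 0 < δ)
    (hp : ∀ᶠ n : ℕ in atTop, c * Real.log n ≤ n * p n)
    (hp0 : Tendsto (fun n ↦ (p n : ℝ)) atTop (nhds 0)) :
    ∀ᶠ n : ℕ in atTop, 1 ≤ δ / p n ∧
      3 * Real.log n ≤ n * (p n : ℝ) ^ 2 * klFun (δ / p n) := by
  have hpos := eventually_pos_of_mul_log_le hc hp
  have hratio : Tendsto (fun n ↦ δ / (p n : ℝ)) atTop atTop :=
    (tendsto_nhdsWithin_iff.2 ⟨hp0, hpos⟩).inv_tendsto_nhdsGT_zero.const_mul_atTop hδ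
  filter_upwards [hp, hpos, hratio.eventually_ge_atTop 1,
    (Real.tendsto_log_atTop.comp hratio).eventually_ge_atTop (1 + 3 / (c * δ))]
    with n hpn hpos hratio hlog
  refine ⟨hratio, ?_⟩
  have hlog' : 3 / (c * δ) ≤ Real.log (δ / p n) - 1 := by
    rw [Function.comp_apply] at hlog; linarith
  calc 3 * Real.log n = c * Real.log n * (δ * (3 / (c * δ))) := by field_simp
    _ ≤ n * p n * (δ * (Real.log (δ / p n) - 1)) := by gcongr
    _ ≤ n * p n * (δ * (Real.log (δ / p n) - 1) + p n) := by gcongr; linarith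
    _ = n * (p n : ℝ) ^ 2 * klFun (δ / p n) := by rw [klFun_apply]; field_simp; ring

lemma tendsto_binomialRandom_ncard_commonNeighbors_lt {δ : ℝ} (hc : 0 < c) (hδ : 0 < δ)
    (hp : ∀ᶠ n : ℕ in atTop, c * Real.log n ≤ n * p n)
    (hp0 : Tendsto (fun n ↦ (p n : ℝ)) atTop (nhds 0)) :
    Tendsto (fun n ↦ G(Fin n, p n).real
      {G | ∀ u v, u ≠ v → ((G.commonNeighbors u v).ncard : ℝ) < δ * (n * p n)})
      atTop (nhds 1) := by
  refine tendsto_measureReal_one_of_eventually_not_le tendsto_inv_atTop_nhds_zero_nat ?_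
  filter_upwards [eventually_three_mul_log_le hc hδ hp hp0, eventually_pos_of_mul_log_le hc hp,
    eventually_gt_atTop 0] with n ⟨hratio, hrate⟩ hpos hn
  have hthreshold : δ * (n * p n) = δ / p n * (n * (p n : ℝ) ^ 2) := by field_simp
  calc G(Fin n, p n).real
        {G | ¬ ∀ u v, u ≠ v → ((G.commonNeighbors u v).ncard : ℝ) < δ * (n * p n)}
      = G(Fin n, p n).real
        {G | ∃ u v, u ≠ v ∧ δ / p n * (n * (p n : ℝ) ^ 2) ≤ (G.commonNeighbors u v).ncard} := by
        simp [hthreshold]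
    _ ≤ n ^ 2 * Real.exp (-(n * (p n : ℝ) ^ 2 * klFun (δ / p n))) := by
        simpa using
          binomialRandom_real_exists_le_ncard_commonNeighbors_le (V := Fin n) (p n) hratio
    _ ≤ n ^ 2 * Real.exp (-(3 * Real.log n)) := by gcongr
    _ = (n : ℝ)⁻¹ := by
        have hn' : (0 : ℝ) < n := mod_cast hn
        rw [Real.exp_neg, mul_comm 3, Real.exp_mul, Real.exp_log hn', Real.rpow_ofNat]
        field_simp

lemma tendsto_binomialRandom_le_eIn {α r : ℝ} (hα : 0 < α) (hr0 : 0 < r) (hr1 : r < 1)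
    (hp : Tendsto (fun n : ℕ ↦ (n * p n : ℝ)) atTop atTop) :
    Tendsto (fun n ↦ G(Fin n, p n).real
      {G | ∀ A : Set (Fin n), α * n ≤ A.ncard → r * ((α * n) ^ 2 / 2 * p n) ≤ eIn G A})
      atTop (nhds 1) := by
  set θ := √r
  have hθ0 : 0 < θ := Real.sqrt_pos.2 hr0
  have hθ1 : θ < 1 := (Real.sqrt_lt' one_pos).2 (by simpa)
  have hrate : 0 < klFun θ := klFun_pos hθ0.le hθ1.ne
  have hlim : Tendsto (fun n : ℕ ↦ Real.exp (-n)) atTop (nhds 0) :=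
    Real.tendsto_exp_neg_atTop_nhds_zero.comp tendsto_natCast_atTop_atTop
  refine tendsto_measureReal_one_of_eventually_not_le hlim ?_
  filter_upwards [hp.eventually_ge_atTop (4 / (θ * α ^ 2 * klFun θ)),
    (tendsto_natCast_atTop_atTop.const_mul_atTop hα).eventually_ge_atTop (1 / (1 - θ))]
    with n hnp hn
  set m := θ * ((α * n) ^ 2 / 2) * (p n : ℝ)
  have hm : m ≤ ⌈α * n⌉₊.choose 2 * p n := by
    have hαn : 0 < α * n := (one_div_pos.2 (sub_pos.2 hθ1)).trans_le hn
    rw [div_le_iff₀ (sub_pos.2 hθ1)] at hn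
    exact mul_le_mul_of_nonneg_right (mul_sq_div_two_le_choose_ceil hαn (by linarith)) (p n).2.1
  have hthreshold : r * ((α * n) ^ 2 / 2 * p n) = θ * m := by
    rw [← Real.mul_self_sqrt hr0.le]; ring
  have hexp : 2 * n ≤ m * klFun θ := by
    rw [div_le_iff₀ (by positivity)] at hnp
    calc (2 * n : ℝ) = n * 4 / 2 := by ring
      _ ≤ n * (n * p n * (θ * α ^ 2 * klFun θ)) / 2 := by gcongr
      _ = m * klFun θ := by ring
  calc G(Fin n, p n).real {G | ¬ ∀ A : Set (Fin n), α * n ≤ A.ncard →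
          r * ((α * n) ^ 2 / 2 * p n) ≤ eIn G A}
      ≤ G(Fin n, p n).real {G | ∃ A : Set (Fin n), ⌈α * n⌉₊ ≤ A.ncard ∧ eIn G A ≤ θ * m} := by
        refine measureReal_mono fun G hG ↦ ?_
        simp only [Set.mem_ofPred_eq, not_forall, not_le, hthreshold] at hG
        obtain ⟨A, hA, hAe⟩ := hG
        exact ⟨A, Nat.ceil_le.2 hA, hAe.le⟩
    _ ≤ 2 ^ n * Real.exp (-(m * klFun θ)) := by
        simpa using binomialRandom_real_exists_eIn_le_le (V := Fin n) (p n) hθ0 hθ1.le hm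
    _ ≤ Real.exp n * Real.exp (-(2 * n)) := by gcongr; exact two_pow_le_exp n
    _ = Real.exp (-n) := by rw [← Real.exp_add]; ring_nf

end BinomialRandomGraphAlmostSurely

lemma setOf_adj_and_adj_eq_commonNeighbors {V : Type*} (G : SimpleGraph V) (u v : V) :
    {w | w ≠ u ∧ w ≠ v ∧ G.Adj u w ∧ G.Adj w v} = G.commonNeighbors u v := by
  ext w
  rw [mem_commonNeighbors, Set.mem_ofPred_eq, G.adj_comm w v]
  exact ⟨fun h ↦ h.2.2, fun h ↦ ⟨h.1.ne', h.2.ne', h⟩⟩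

/-- if `p = p(n) ∈ [0,1]` satisfies `3 log n/(4n) ≤ p(n)` for large `n`
and `p(n) → 0`, then a.a.s. `G(n,p)` satisfies: (a) any two distinct vertices are joined
by fewer than `np/2400` paths of length 2; (b) all degrees are at most `4np`;
(c) every set of `⌈n/3⌉` vertices induces at least `n²p/25` edges. -/
theorem stmt_15 (p : ℕ → ℝ) (hp : ∀ n, p n ∈ Set.Icc (0 : ℝ) 1)
    (hlb : ∀ᶠ n : ℕ in atTop, 3 * Real.log n / (4 * n) ≤ p n)
    (h0 : Tendsto p atTop (nhds 0)) :
    Tendsto (fun n => gnpProb n (p n) (fun G =>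
      (∀ u v : Fin n, u ≠ v →
        (({w | w ≠ u ∧ w ≠ v ∧ G.Adj u w ∧ G.Adj w v}).ncard : ℝ) < n * p n / 2400) ∧
      (∀ v, ((G.neighborSet v).ncard : ℝ) ≤ 4 * n * p n) ∧
      (∀ A : Set (Fin n), A.ncard = ⌈(n : ℝ) / 3⌉₊ →
        (n : ℝ)^2 * p n / 25 ≤ (eIn G A : ℝ))))
      atTop (nhds 1) := by
  lift p to ℕ → I using hp
  have hlog : ∀ᶠ n : ℕ in atTop, 3 / 4 * Real.log n ≤ n * p n := by
    filter_upwards [hlb, eventually_gt_atTop 0] with n hn hn0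
    rw [div_le_iff₀ (by positivity)] at hn
    linarith
  have hnp : Tendsto (fun n : ℕ ↦ (n * p n : ℝ)) atTop atTop :=
    tendsto_atTop_mono' _ hlog <| (Real.tendsto_log_atTop.comp
      tendsto_natCast_atTop_atTop).const_mul_atTop (by norm_num)
  have hpaths := tendsto_binomialRandom_ncard_commonNeighbors_lt (δ := 1 / 2400)
    (by norm_num) (by norm_num) hlog h0
  have hdegree := tendsto_binomialRandom_ncard_neighborSet_le (K := 4) hlog (by norm_num)
    (by linarith [four_thirds_lt_klFun_four])
  have hedges := tendsto_binomialRandom_le_eIn (α := 1 / 3) (r := 18 / 25)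
    (by norm_num) (by norm_num) (by norm_num) hnp
  have hall := tendsto_measureReal_and_one (fun _ ↦ .of_discrete) (fun _ ↦ .of_discrete) hpaths <|
    tendsto_measureReal_and_one (fun _ ↦ .of_discrete) (fun _ ↦ .of_discrete) hdegree hedges
  simp_rw [gnpProb_eq_binomialRandom_real, setOf_adj_and_adj_eq_commonNeighbors]
  refine tendsto_measureReal_one_mono (fun n G ⟨ha, hb, hc⟩ ↦ ⟨fun u v huv ↦ ?_, fun v ↦ ?_,
    fun A hA ↦ ?_⟩) hall
  · linarith [ha u v huv]
  · linarith [hb v]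
  · have hA' : 1 / 3 * (n : ℝ) ≤ A.ncard := by rw [hA, one_div_mul_eq_div]; exact Nat.le_ceil _
    linarith [hc A hA']
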